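/- The free product ℤ/2 * ℤ/2 * ℤ/2 modulo the braid relations between each pair of generators (⟨a,b⟩ = ⟨b,c⟩ = ⟨c,a⟩ = e) is isomorphic to an extension of S₄: specifically, the group ⟨a, b, c | a², b², c², aba = bab, bcb = cbc, cac = aca⟩ surjects onto S₄ via a ↦ (1 2), b ↦ (2 3), c ↦ (2 4), and the kernel of this surjection is a free abelian group of finite rank. -/

import Mathlib

def stmt19Rels : Set (FreeGroup (Fin 3)) :=
  { (FreeGroup.of 0) ^ 2, (FreeGroup.of 1) ^ 2, (FreeGroup.of 2) ^ 2,
    FreeGroup.of 0 * FreeGroup.of 1 * FreeGroup.of 0 *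
      (FreeGroup.of 1 * FreeGroup.of 0 * FreeGroup.of 1)⁻¹,
    FreeGroup.of 1 * FreeGroup.of 2 * FreeGroup.of 1 *
      (FreeGroup.of 2 * FreeGroup.of 1 * FreeGroup.of 2)⁻¹,
    FreeGroup.of 2 * FreeGroup.of 0 * FreeGroup.of 2 *
      (FreeGroup.of 0 * FreeGroup.of 2 * FreeGroup.of 0)⁻¹ }

namespace Stmt19

abbrev G := PresentedGroup stmt19Rels

/-- The universal property of the presented group. -/
theorem exists_hom {H : Type} [Group H] (x y z : H) (hx : x * x = 1) (hy : y * y = 1)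
    (hz : z * z = 1) (h1 : x * y * x = y * x * y) (h2 : y * z * y = z * y * z)
    (h3 : z * x * z = x * z * x) :
    ∃ f : G →* H, f (PresentedGroup.of 0) = x ∧ f (PresentedGroup.of 1) = y ∧
      f (PresentedGroup.of 2) = z := by
  have h : ∀ r ∈ stmt19Rels, FreeGroup.lift ![x, y, z] r = 1 := by
    intro r hr
    simp only [stmt19Rels, Set.mem_insert_iff, Set.mem_singleton_iff] at hr
    rcases hr with rfl | rfl | rfl | rfl | rfl | rfl
    · simp [pow_two, hx]
    · simp [pow_two, hy]
    · simp [pow_two, hz]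
    · rw [map_mul, map_inv, mul_inv_eq_one]; simpa using h1
    · rw [map_mul, map_inv, mul_inv_eq_one]; simpa using h2
    · rw [map_mul, map_inv, mul_inv_eq_one]; simpa using h3
  refine ⟨PresentedGroup.toGroup h, ?_, ?_, ?_⟩ <;> simp [PresentedGroup.toGroup.of]

def a : G := PresentedGroup.of 0
def b : G := PresentedGroup.of 1
def c : G := PresentedGroup.of 2

theorem aa : a * a = 1 := by
  rw [← pow_two]
  exact PresentedGroup.one_of_mem (rels := stmt19Rels) (x := FreeGroup.of 0 ^ 2)
    (by simp [stmt19Rels])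
theorem bb : b * b = 1 := by
  rw [← pow_two]
  exact PresentedGroup.one_of_mem (rels := stmt19Rels) (x := FreeGroup.of 1 ^ 2)
    (by simp [stmt19Rels])
theorem cc : c * c = 1 := by
  rw [← pow_two]
  exact PresentedGroup.one_of_mem (rels := stmt19Rels) (x := FreeGroup.of 2 ^ 2)
    (by simp [stmt19Rels])
theorem aba : a * b * a = b * a * b :=
  PresentedGroup.mk_eq_mk_of_mul_inv_mem (rels := stmt19Rels)
    (x := FreeGroup.of 0 * FreeGroup.of 1 * FreeGroup.of 0)
    (y := FreeGroup.of 1 * FreeGroup.of 0 * FreeGroup.of 1) (by simp [stmt19Rels])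
theorem bcb : b * c * b = c * b * c :=
  PresentedGroup.mk_eq_mk_of_mul_inv_mem (rels := stmt19Rels)
    (x := FreeGroup.of 1 * FreeGroup.of 2 * FreeGroup.of 1)
    (y := FreeGroup.of 2 * FreeGroup.of 1 * FreeGroup.of 2) (by simp [stmt19Rels])
theorem cac : c * a * c = a * c * a :=
  PresentedGroup.mk_eq_mk_of_mul_inv_mem (rels := stmt19Rels)
    (x := FreeGroup.of 2 * FreeGroup.of 0 * FreeGroup.of 2)
    (y := FreeGroup.of 0 * FreeGroup.of 2 * FreeGroup.of 0) (by simp [stmt19Rels])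

theorem aa' (x : G) : a * (a * x) = x := by rw [← mul_assoc, aa, one_mul]
theorem bb' (x : G) : b * (b * x) = x := by rw [← mul_assoc, bb, one_mul]
theorem cc' (x : G) : c * (c * x) = x := by rw [← mul_assoc, cc, one_mul]
theorem bab1 : b * (a * b) = a * (b * a) := by simpa [mul_assoc] using aba.symm
theorem bab2 (x : G) : b * (a * (b * x)) = a * (b * (a * x)) := by
  simpa [mul_assoc] using congrArg (· * x) aba.symm
theorem cbc1 : c * (b * c) = b * (c * b) := by simpa [mul_assoc] using bcb.symm
theorem cbc2 (x : G) : c * (b * (c * x)) = b * (c * (b * x)) := by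
  simpa [mul_assoc] using congrArg (· * x) bcb.symm
theorem cac1 : c * (a * c) = a * (c * a) := by simpa [mul_assoc] using cac
theorem cac2 (x : G) : c * (a * (c * x)) = a * (c * (a * x)) := by
  simpa [mul_assoc] using congrArg (· * x) cac

theorem ainv : a⁻¹ = a := inv_eq_of_mul_eq_one_left aa
theorem binv : b⁻¹ = b := inv_eq_of_mul_eq_one_left bb
theorem cinv : c⁻¹ = c := inv_eq_of_mul_eq_one_left cc

def t : G := a * b * c * b
def u : G := b * a * b * c

theorem tu : Commute t u := by
  have h : u * t⁻¹ = t⁻¹ * u := by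
    simp only [t, u, mul_inv_rev, ainv, binv, cinv, mul_assoc]
    simp only [aa, bb, cc, aa', bb', cc', bab1, bab2, cbc1, cbc2, cac1, cac2]
  have h' : Commute u t⁻¹ := h
  simpa using h'.symm.inv_left

theorem at_ : a * t * a⁻¹ = t⁻¹ := by
  simp only [t, mul_inv_rev, ainv, binv, cinv, mul_assoc, aa']
theorem au_ : a * u * a⁻¹ = t⁻¹ * u := by
  simp only [t, u, mul_inv_rev, ainv, binv, cinv, mul_assoc]
  simp only [aa, bb, cc, aa', bb', cc', bab1, bab2, cbc1, cbc2, cac1, cac2]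
theorem bt_ : b * t * b⁻¹ = u := by
  simp only [t, u, binv, mul_assoc, bb, mul_one]
theorem bu_ : b * u * b⁻¹ = t := by
  simp only [t, u, binv, mul_assoc, bb']

theorem c_eq : c = b * a * t * b := by
  simp only [t, mul_assoc, aa', bb', bb, mul_one]

/-- Elements of the finite parabolic subgroup. -/
def S : Set G := {1, a, b, a * b, b * a, a * b * a}

theorem aS {w : G} (hw : w ∈ S) : a * w ∈ S := by
  simp only [S, Set.mem_insert_iff, Set.mem_singleton_iff] at hw ⊢
  rcases hw with rfl | rfl | rfl | rfl | rfl | rfl <;> simp [mul_assoc, aa, aa']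
theorem bS {w : G} (hw : w ∈ S) : b * w ∈ S := by
  simp only [S, Set.mem_insert_iff, Set.mem_singleton_iff] at hw ⊢
  rcases hw with rfl | rfl | rfl | rfl | rfl | rfl <;>
    simp [mul_assoc, bb, bb', bab1, bab2, aa]

def NF (g : G) : Prop := ∃ i j : ℤ, ∃ w ∈ S, g = t ^ i * u ^ j * w

theorem NF.t {g : G} (h : NF g) : NF (t * g) := by
  obtain ⟨i, j, w, hw, rfl⟩ := h
  exact ⟨1 + i, j, w, hw, by rw [zpow_add, zpow_one]; simp only [mul_assoc]⟩

theorem NF.a {g : G} (h : NF g) : NF (a * g) := by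
  obtain ⟨i, j, w, hw, rfl⟩ := h
  refine ⟨-i - j, j, Stmt19.a * w, aS hw, ?_⟩
  have e : Stmt19.a * (Stmt19.t ^ i * u ^ j) * Stmt19.a⁻¹ = Stmt19.t ^ (-i - j) * u ^ j := by
    rw [conj_mul.symm, ← conj_zpow, ← conj_zpow, at_, au_, tu.inv_left.mul_zpow, inv_zpow',
      inv_zpow', ← mul_assoc, ← zpow_add]
    rfl
  rw [← e]; group

theorem NF.b {g : G} (h : NF g) : NF (b * g) := by
  obtain ⟨i, j, w, hw, rfl⟩ := h
  refine ⟨j, i, Stmt19.b * w, bS hw, ?_⟩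
  have e : Stmt19.b * (Stmt19.t ^ i * u ^ j) * Stmt19.b⁻¹ = Stmt19.t ^ j * u ^ i := by
    rw [conj_mul.symm, ← conj_zpow, ← conj_zpow, bt_, bu_, (tu.zpow_zpow j i).eq]
  rw [← e]; group

theorem NF.c {g : G} (h : NF g) : NF (c * g) := by
  rw [c_eq]
  have := h.b.t.a.b
  simpa only [mul_assoc] using this

theorem nf_all (g : G) : NF g := by
  have hg : g ∈ Subgroup.closure (Set.range (PresentedGroup.of (rels := stmt19Rels))) := by
    rw [PresentedGroup.closure_range_of]; trivial
  induction hg using Subgroup.closure_induction_left with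
  | one => exact ⟨0, 0, 1, by simp [S], by simp⟩
  | mul_left x hx y _ ih =>
    obtain ⟨i, rfl⟩ := hx
    fin_cases i
    · exact ih.a
    · exact ih.b
    · exact ih.c
  | inv_mul_cancel x hx y _ ih =>
    obtain ⟨i, rfl⟩ := hx
    fin_cases i
    · have := ih.a; rw [← ainv] at this; exact this
    · have := ih.b; rw [← binv] at this; exact this
    · have := ih.c; rw [← cinv] at this; exact this

def pa : Equiv.Perm (ℤ × ℤ) where
  toFun p := (-p.1 - p.2, p.2)
  invFun p := (-p.1 - p.2, p.2)
  left_inv p := by ext <;> simp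
  right_inv p := by ext <;> simp
def pb : Equiv.Perm (ℤ × ℤ) where
  toFun p := (p.2, p.1)
  invFun p := (p.2, p.1)
  left_inv p := rfl
  right_inv p := rfl
def pc : Equiv.Perm (ℤ × ℤ) where
  toFun p := (p.1, -p.1 - p.2 - 1)
  invFun p := (p.1, -p.1 - p.2 - 1)
  left_inv p := by ext <;> simp <;> ring
  right_inv p := by ext <;> simp <;> ring

theorem exists_phi : ∃ φ : G →* Equiv.Perm (ℤ × ℤ), φ a = pa ∧ φ b = pb ∧ φ c = pc := by
  apply exists_hom <;> ext p <;> simp [pa, pb, pc] <;> ring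

/-- Translation action. -/
def tr : Multiplicative (ℤ × ℤ) →* Equiv.Perm (ℤ × ℤ) := AddAction.toPermHom (ℤ × ℤ) (ℤ × ℤ) |>.toMultiplicativeLeft

theorem tr_apply (x p : ℤ × ℤ) : tr (Multiplicative.ofAdd x) p = x + p := rfl

theorem inj {i j : ℤ} (h : t ^ i * u ^ j = 1) : i = 0 ∧ j = 0 := by
  obtain ⟨φ, ha, hb, hc⟩ := exists_phi
  have ht : φ t = tr (Multiplicative.ofAdd (1, 0)) := by
    ext p <;> simp [t, ha, hb, hc, tr_apply, pa, pb, pc] <;> ring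
  have hu : φ u = tr (Multiplicative.ofAdd (0, 1)) := by
    ext p <;> simp [u, ha, hb, hc, tr_apply, pa, pb, pc] <;> ring
  have h' := congrArg φ h
  rw [map_mul, map_zpow, map_zpow, ht, hu, ← map_zpow tr, ← map_zpow tr, ← map_mul, ← ofAdd_zsmul,
    ← ofAdd_zsmul, ← ofAdd_add, map_one] at h'
  have := congrArg (fun e : Equiv.Perm (ℤ × ℤ) => e 0) h'
  simpa [tr_apply] using this

theorem surj_aux : ∀ σ : Equiv.Perm (Fin 4), σ ∈ Subgroup.closure
    ({Equiv.swap 0 1, Equiv.swap 1 2, Equiv.swap 1 3} : Set (Equiv.Perm (Fin 4))) := by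
  intro σ
  set K := Subgroup.closure
    ({Equiv.swap 0 1, Equiv.swap 1 2, Equiv.swap 1 3} : Set (Equiv.Perm (Fin 4))) with hK
  have h1 : Equiv.swap 0 1 ∈ K := Subgroup.subset_closure (by simp)
  have h2 : Equiv.swap 1 2 ∈ K := Subgroup.subset_closure (by simp)
  have h3 : Equiv.swap 1 3 ∈ K := Subgroup.subset_closure (by simp)
  have key : ∀ x y : Fin 4, x ≠ y → Equiv.swap x y ∈ K := by
    have s1 : ∀ x : Fin 4, Equiv.swap 1 x ∈ K := by
      intro x
      fin_cases x
      · simpa [Equiv.swap_comm] using h1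
      · exact (Equiv.swap_self (1 : Fin 4)).symm ▸ K.one_mem
      · exact h2
      · exact h3
    intro x y hxy
    have e : ∀ x y : Fin 4, x ≠ y → Equiv.swap x y = Equiv.swap 1 x * Equiv.swap 1 y * Equiv.swap 1 x ∨
      Equiv.swap x y = Equiv.swap 1 x ∨ Equiv.swap x y = Equiv.swap 1 y := by decide
    rcases e x y hxy with e | e | e <;> rw [e]
    · exact K.mul_mem (K.mul_mem (s1 x) (s1 y)) (s1 x)
    · exact s1 x
    · exact s1 y
  induction σ using Equiv.Perm.swap_induction_on with
  | one => exact K.one_mem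
  | swap_mul f x y hxy hf => exact K.mul_mem (key x y hxy) hf

end Stmt19

open Stmt19 in
theorem stmt_19 :
    ∃ f : PresentedGroup stmt19Rels →* Equiv.Perm (Fin 4),
      Function.Surjective f ∧
      f (PresentedGroup.of 0) = Equiv.swap 0 1 ∧
      f (PresentedGroup.of 1) = Equiv.swap 1 2 ∧
      f (PresentedGroup.of 2) = Equiv.swap 1 3 ∧
      ∃ m : ℕ, Nonempty (f.ker ≃* Multiplicative (Fin m → ℤ)) := by
  obtain ⟨f, ha, hb, hc⟩ := exists_hom (Equiv.swap (0 : Fin 4) 1) (Equiv.swap 1 2)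
    (Equiv.swap 1 3) (by decide) (by decide) (by decide) (by decide) (by decide) (by decide)
  refine ⟨f, ?_, ha, hb, hc, 2, ?_⟩
  · rw [← MonoidHom.range_eq_top, eq_top_iff]
    intro σ _
    refine (Subgroup.closure_le _).2 ?_ (surj_aux σ)
    rintro x (rfl | rfl | rfl)
    · exact ⟨_, ha⟩
    · exact ⟨_, hb⟩
    · exact ⟨_, hc⟩
  have ha' : f a = Equiv.swap 0 1 := ha
  have hb' : f b = Equiv.swap 1 2 := hb
  have hc' : f c = Equiv.swap 1 3 := hc
  have ht : f t = Equiv.swap 0 1 * Equiv.swap 1 2 * Equiv.swap 1 3 * Equiv.swap 1 2 := by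
    simp only [t, map_mul, ha', hb', hc']
  have hu : f u = Equiv.swap 1 2 * Equiv.swap 0 1 * Equiv.swap 1 2 * Equiv.swap 1 3 := by
    simp only [u, map_mul, ha', hb', hc']
  have ht2 : f t ^ (2 : ℤ) = 1 := by rw [ht]; decide
  have hu2 : f u ^ (2 : ℤ) = 1 := by rw [hu]; decide
  have hmem : ∀ i j : ℤ, t ^ (2 * i) * u ^ (2 * j) ∈ f.ker := by
    intro i j
    rw [MonoidHom.mem_ker, map_mul, map_zpow, map_zpow, zpow_mul, zpow_mul, ht2, hu2]
    simp
  let ψ : Multiplicative (Fin 2 → ℤ) →* f.ker :=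
    { toFun := fun v => ⟨t ^ (2 * v.toAdd 0) * u ^ (2 * v.toAdd 1), hmem _ _⟩
      map_one' := by ext; simp
      map_mul' := by
        intro v w
        ext
        simp only [toAdd_mul, Pi.add_apply, mul_add, zpow_add, Subgroup.coe_mul]
        have := (tu.zpow_zpow (2 * w.toAdd 0) (2 * v.toAdd 1)).eq
        simp only [mul_assoc]
        rw [← mul_assoc (t ^ (2 * w.toAdd 0)) (u ^ (2 * v.toAdd 1)), this]
        simp only [mul_assoc] }
  refine ⟨(MulEquiv.ofBijective ψ ⟨?_, ?_⟩).symm⟩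
  · rw [injective_iff_map_eq_one]
    intro v hv
    obtain ⟨h0, h1⟩ := inj (congrArg Subtype.val hv)
    apply Multiplicative.toAdd.injective
    funext k
    fin_cases k
    · simpa using h0
    · simpa using h1
  · rintro ⟨g, hg⟩
    obtain ⟨i, j, w, hw, rfl⟩ := nf_all g
    rw [MonoidHom.mem_ker, map_mul, map_mul, map_zpow, map_zpow] at hg
    have key : (∃ k, i = 2 * k) ∧ (∃ l, j = 2 * l) ∧ w = 1 := by
      simp only [S, Set.mem_insert_iff, Set.mem_singleton_iff] at hw
      obtain ⟨k, hi | hi⟩ := Int.even_or_odd' i <;>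
      obtain ⟨l, hj | hj⟩ := Int.even_or_odd' j <;>
      rw [hi, hj] at hg <;>
      simp only [zpow_add, zpow_mul, ht2, hu2, one_zpow, zpow_one, one_mul] at hg <;>
      rcases hw with rfl | rfl | rfl | rfl | rfl | rfl <;>
      first
      | exact ⟨⟨k, hi⟩, ⟨l, hj⟩, rfl⟩
      | (exfalso
         simp only [map_mul, map_one, ht, hu, ha', hb'] at hg
         revert hg
         decide)
    obtain ⟨⟨k, rfl⟩, ⟨l, rfl⟩, rfl⟩ := key
    refine ⟨Multiplicative.ofAdd ![k, l], ?_⟩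
    ext
    simp [ψ]
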